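/- arXiv:math/0511474 — 2 statements merged into one kernel-verified Lean document; each statement's English description precedes it below -/
import Mathlib

section
/- For every natural number n, the number of words of length at most n in N_fin(p) is at most the cardinality of the ball B(n) in the generalized Thompson group F(p): #{w ∈ N_fin(p) : |w| ≤ n} ≤ #B(n). -/
/-- Relators of the generalized Thompson group `F(p)`. -/
def ThompsonRels (p : ℕ) : Set (FreeGroup ℕ) :=
  {r | ∃ i j : ℕ, i < j ∧
    r = FreeGroup.of j * FreeGroup.of i * (FreeGroup.of (j + p - 1))⁻¹ * (FreeGroup.of i)⁻¹}

/-- The generalized Thompson group `F(p)` as a presented group. -/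
abbrev FP (p : ℕ) := PresentedGroup (ThompsonRels p)

/-- The generator `x_i` of `F(p)`. -/
def xgen (p : ℕ) (i : ℕ) : FP p := PresentedGroup.of i

/-- Word length of `g ∈ F(p)` with respect to `x_0, …, x_{p−1}`: the least `n`
such that `g` is a product of `n` elements of `{x_0^{±1}, …, x_{p−1}^{±1}}`. -/
noncomputable def wlen (p : ℕ) (g : FP p) : ℕ :=
  sInf {n | ∃ l : List (FP p), l.length = n ∧
    (∀ a ∈ l, ∃ i < p, a = xgen p i ∨ a = (xgen p i)⁻¹) ∧ l.prod = g}

/-- The forbidden subwords (1)–(5). -/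
def Forbidden (p : ℕ) (u : List (ℕ × Bool)) : Prop :=
  (∃ (i : ℕ) (ε : Bool), i ≤ p - 1 ∧ u = [(i, ε), (i, !ε)]) ∨
  (∃ (α β k : ℕ) (ε : Bool), 1 ≤ β ∧ β < α ∧ α ≤ p - 1 ∧
    u = (α, ε) :: (List.replicate k ((0 : ℕ), true) ++ [(β, true)])) ∨
  (∃ (α β k : ℕ) (ε : Bool), 1 ≤ β ∧ β < α ∧ α ≤ p - 1 ∧
    u = (α, ε) :: (List.replicate (k + 1) ((0 : ℕ), true) ++ [(β, false)])) ∨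
  (∃ (α β k : ℕ) (ε : Bool), 1 ≤ α ∧ α ≤ β ∧ β ≤ p - 1 ∧
    u = (α, ε) :: (List.replicate (k + 1) ((0 : ℕ), true) ++ [(β, true)])) ∨
  (∃ (α β k : ℕ) (ε : Bool), 1 ≤ α ∧ α ≤ β ∧ β ≤ p - 1 ∧
    u = (α, ε) :: (List.replicate (k + 2) ((0 : ℕ), true) ++ [(β, false)]))

/-- `N_fin(p)`: words over `x_0^{±1}, …, x_{p−1}^{±1}` with no forbidden
subword. -/
def NFin (p : ℕ) (w : List (ℕ × Bool)) : Prop :=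
  (∀ a ∈ w, a.1 ≤ p - 1) ∧ ∀ u, u <:+: w → ¬ Forbidden p u

/-! Write `q = p - 1`, and index the generators by `ℤ` through `x_{a-kq} = x_0^k x_a x_0^{-k}` for
`1 ≤ a ≤ q`. Moving all letters `x_0` of a word to its right end turns it into `v x_0^t`, where `v`
is a word in the letters `x_i^{±1}` with `i ∈ ℤ`. The forbidden subwords are chosen so that `v`
is a normal form of the group `⟨x_i (i ∈ ℤ) ∣ x_j x_i = x_i x_{j+q} for i < j⟩`: no letter cancels
the next one or can be moved past it. As in van der Waerden's proof of the normal form theorem for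
free products, `F(p)` acts on the pairs `(v, t)`, with `v` a normal form, by insertion of letters,
and a word of `N_fin(p)` maps `([], 0)` to its own pair. The pair determines the word as an element
of the free group, hence as a word, because words of `N_fin(p)` are reduced. So distinct words of
`N_fin(p)` represent distinct elements of `F(p)`. -/

section Insertion

variable (q : ℕ) {e : Bool} {i j : ℤ} {a b : ℤ × Bool} {v : List (ℤ × Bool)}

/-- The index that a letter of index `j` acquires when it moves to the right past a letter of
sign `d` and smaller index. -/
def slide (d : Bool) (j : ℤ) : ℤ := bif d then j + q else j - q

/-- A letter of index `j` on the left of `b` can be moved past `b` by a defining relation,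
`x_j x_i = x_i x_{j+q}` or `x_j x_i⁻¹ = x_i⁻¹ x_{j-q}`. -/
def Passes (j : ℤ) (b : ℤ × Bool) : Prop := b.1 < j ∧ b.1 < slide q b.2 j

instance : Decidable (Passes q j b) := inferInstanceAs (Decidable (_ ∧ _))

/-- The letter `a` may precede the letter `b` in a normal form: they neither cancel nor can `a`
be moved past `b`. -/
def Compatible (a b : ℤ × Bool) : Prop := (a.1 = b.1 → a.2 = b.2) ∧ ¬ Passes q a.1 b

/-- Normal forms of the group `⟨x_i (i ∈ ℤ) ∣ x_j x_i = x_i x_{j+q} for i < j⟩`, where `(i, true)`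
stands for `x_i` and `(i, false)` for `x_i⁻¹`. -/
def IsNormal (v : List (ℤ × Bool)) : Prop := v.IsChain (Compatible q)

/-- The normal form of `x_j^{±1} v` for a normal form `v`, the sign being given by `e`. -/
def insertLetter (e : Bool) : ℤ → List (ℤ × Bool) → List (ℤ × Bool)
  | j, [] => [(j, e)]
  | j, b :: v =>
    if b = (j, !e) then v
    else if Passes q j b then b :: insertLetter e (slide q b.2 j) v
    else (j, e) :: b :: v

variable {q}

theorem slide_add (d : Bool) (j s : ℤ) : slide q d (j + s) = slide q d j + s := by
  cases d <;> simp only [slide, cond_true, cond_false] <;> ring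

theorem slide_strictMono (d : Bool) : StrictMono (slide q d) := by
  intro i j hij
  cases d <;> simpa [slide] using hij

theorem Passes.mono (h : Passes q i b) (hij : i ≤ j) : Passes q j b :=
  ⟨h.1.trans_le hij, h.2.trans_le ((slide_strictMono b.2).monotone hij)⟩

theorem Passes.fst_ne (h : Passes q j b) : b.1 ≠ j := h.1.ne

theorem Passes.compatible (h : Passes q j a) : Compatible q a (slide q a.2 j, e) := by
  obtain ⟨i, _ | _⟩ := a <;> grind [Compatible, Passes, slide]

theorem Compatible.of_passes (h : Passes q j a) (hb : Compatible q (slide q a.2 j, e) b) :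
    Compatible q a b := by
  obtain ⟨i, _ | _⟩ := a <;> obtain ⟨k, _ | _⟩ := b <;> grind [Compatible, Passes, slide]

theorem compatible_of_not_passes (hne : b ≠ (j, !e)) (h : ¬ Passes q j b) :
    Compatible q (j, e) b :=
  ⟨fun hj => by
    contrapose! hne
    exact Prod.ext hj.symm (Bool.eq_not.2 hne.symm), h⟩

theorem insertLetter_cancel : insertLetter q e j ((j, !e) :: v) = v := by
  simp [insertLetter]

theorem insertLetter_of_passes (h : Passes q j b) :
    insertLetter q e j (b :: v) = b :: insertLetter q e (slide q b.2 j) v := by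
  rw [insertLetter, if_neg (fun hb => h.fst_ne (congrArg Prod.fst hb)), if_pos h]

theorem insertLetter_eq_cons (h : IsNormal q ((j, e) :: v)) :
    insertLetter q e j v = (j, e) :: v := by
  cases v with
  | nil => rfl
  | cons b v =>
    obtain ⟨hne, hb⟩ := (List.isChain_cons_cons.1 h).1
    rw [insertLetter, if_neg (by rintro rfl; simp at hne), if_neg hb]

theorem IsNormal.cons_insertLetter (h : IsNormal q (a :: v)) (ha : Passes q j a) :
    IsNormal q (a :: insertLetter q e (slide q a.2 j) v) := by
  induction v generalizing a j with
  | nil => exact List.isChain_pair.2 ha.compatible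
  | cons b v ih =>
    rw [insertLetter]
    obtain ⟨hab, hbv⟩ := List.isChain_cons_cons.1 h
    split_ifs with hb hpass
    · subst hb
      cases v with
      | nil => exact List.isChain_singleton _
      | cons c v =>
        obtain ⟨hbc, hcv⟩ := List.isChain_cons_cons.1 hbv
        exact List.isChain_cons_cons.2 ⟨hbc.of_passes ha, hcv⟩
    · exact List.isChain_cons_cons.2 ⟨hab, ih hbv hpass⟩
    · exact List.isChain_cons_cons.2 ⟨ha.compatible,
        List.isChain_cons_cons.2 ⟨compatible_of_not_passes hb hpass, hbv⟩⟩

theorem IsNormal.insertLetter (h : IsNormal q v) (e : Bool) (j : ℤ) :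
    IsNormal q (insertLetter q e j v) := by
  cases v with
  | nil => exact List.isChain_singleton _
  | cons b v =>
    rw [_root_.insertLetter]
    split_ifs with hb hpass
    · exact h.tail
    · exact h.cons_insertLetter hpass
    · exact List.isChain_cons_cons.2 ⟨compatible_of_not_passes hb hpass, h⟩

theorem insertLetter_not_insertLetter (h : IsNormal q v) (e : Bool) (j : ℤ) :
    insertLetter q (!e) j (insertLetter q e j v) = v := by
  induction v generalizing j with
  | nil => simp [insertLetter]
  | cons b v ih =>
    rw [insertLetter]
    split_ifs with hb hpass
    · subst hb
      exact insertLetter_eq_cons h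
    · rw [insertLetter_of_passes hpass, ih h.tail]
    · simp [insertLetter]

theorem insertLetter_insertLetter_of_normal (hij : i < j) (h : IsNormal q ((i, true) :: v)) :
    insertLetter q e j (insertLetter q true i v) =
      insertLetter q true i (insertLetter q e (j + q) v) := by
  have hpass : Passes q j (i, true) := by
    grind [Passes, slide]
  rw [insertLetter_eq_cons h, insertLetter_of_passes hpass]
  exact (insertLetter_eq_cons (h.cons_insertLetter hpass)).symm

theorem insertLetter_insertLetter (hij : i < j) (h : IsNormal q v) :
    insertLetter q e j (insertLetter q true i v) =
      insertLetter q true i (insertLetter q e (j + q) v) := by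
  induction v generalizing i j with
  | nil => exact insertLetter_insertLetter_of_normal hij (List.isChain_singleton _)
  | cons b v ih =>
    by_cases hb : b = (i, !true)
    · subst hb
      have hpass : Passes q (j + q) (i, !true) := by grind [Passes, slide]
      rw [insertLetter_cancel, insertLetter_of_passes hpass, insertLetter_cancel]
      simp [slide]
    by_cases hi : Passes q i b
    · rw [insertLetter_of_passes hi, insertLetter_of_passes (hi.mono hij.le),
        insertLetter_of_passes (hi.mono (by omega)), insertLetter_of_passes hi,
        ih (slide_strictMono b.2 hij) h.tail, slide_add]
    · exact insertLetter_insertLetter_of_normal hij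
        (List.isChain_cons_cons.2 ⟨compatible_of_not_passes hb hi, h⟩)

end Insertion

section Shift

variable {q : ℕ} {v : List (ℤ × Bool)}

/-- The translation of all indices of a word by `s`. -/
def shift (s : ℤ) (v : List (ℤ × Bool)) : List (ℤ × Bool) := v.map fun a => (a.1 + s, a.2)

theorem passes_add_iff {s j : ℤ} {b : ℤ × Bool} :
    Passes q (j + s) (b.1 + s, b.2) ↔ Passes q j b := by
  simp only [Passes, slide_add, add_lt_add_iff_right]

theorem shift_shift (s t : ℤ) (v : List (ℤ × Bool)) : shift s (shift t v) = shift (t + s) v := by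
  simp only [shift, List.map_map, Function.comp_def, add_assoc]

theorem shift_zero (v : List (ℤ × Bool)) : shift 0 v = v := by
  simp [shift]

theorem IsNormal.shift (h : IsNormal q v) (s : ℤ) : IsNormal q (shift s v) := by
  refine List.isChain_map_of_isChain _ (fun a b hab => ⟨fun hs => hab.1 (by simpa using hs), ?_⟩) h
  exact passes_add_iff.not.2 hab.2

theorem insertLetter_shift (e : Bool) (s j : ℤ) (v : List (ℤ × Bool)) :
    insertLetter q e (j + s) (shift s v) = shift s (insertLetter q e j v) := by
  induction v generalizing j with
  | nil => rfl
  | cons b v ih =>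
    have hcons : shift s (b :: v) = (b.1 + s, b.2) :: shift s v := rfl
    have heq : (b.1 + s, b.2) = (j + s, !e) ↔ b = (j, !e) := by simp [Prod.ext_iff]
    simp only [hcons, insertLetter, heq, passes_add_iff, slide_add, ih]
    split_ifs <;> rfl

end Shift

section Action

variable (q : ℕ)

/-- The normal forms as a type, on which the generators act by permutations. -/
abbrev NormalForm := {v : List (ℤ × Bool) // IsNormal q v}

/-- Left multiplication by `x_j` on normal forms. -/
def insertPerm (j : ℤ) : Equiv.Perm (NormalForm q) where
  toFun v := ⟨insertLetter q true j v, v.2.insertLetter true j⟩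
  invFun v := ⟨insertLetter q false j v, v.2.insertLetter false j⟩
  left_inv v := Subtype.ext (insertLetter_not_insertLetter v.2 true j)
  right_inv v := Subtype.ext (insertLetter_not_insertLetter v.2 false j)

/-- Translation of indices by `s` on normal forms. -/
def shiftPerm (s : ℤ) : Equiv.Perm (NormalForm q) where
  toFun v := ⟨shift s v, v.2.shift s⟩
  invFun v := ⟨shift (-s) v, v.2.shift (-s)⟩
  left_inv v := Subtype.ext (by simp only [shift_shift, add_neg_cancel, shift_zero])
  right_inv v := Subtype.ext (by simp only [shift_shift, neg_add_cancel, shift_zero])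

/-- The action of the generator `x_i` of `F(q + 1)` on pairs `(v, t)`, which stand for the
products `v x_0^t`: since `x_0 x_{j+q} = x_j x_0`, moving `x_0` to the right of `v` lowers all
indices by `q`. -/
def generatorPerm : ℕ → Equiv.Perm (NormalForm q × ℤ)
  | 0 => (shiftPerm q (-q)).prodCongr (Equiv.addRight 1)
  | i + 1 => (insertPerm q (i + 1)).prodCongr (Equiv.refl ℤ)

theorem generatorPerm_mul_generatorPerm {i j : ℕ} (hij : i < j) :
    generatorPerm q j * generatorPerm q i = generatorPerm q i * generatorPerm q (j + q) := by
  obtain ⟨j, rfl⟩ := Nat.exists_eq_succ_of_ne_zero (Nat.ne_zero_of_lt hij)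
  rw [Nat.succ_add]
  ext1 ⟨v, t⟩
  cases i with
  | zero =>
    refine Prod.ext (Subtype.ext ?_) rfl
    change insertLetter q true (j + 1) (shift (-q) v) =
      shift (-q) (insertLetter q true ((j + q : ℕ) + 1) v)
    rw [← insertLetter_shift]
    congr 1
    push_cast
    ring
  | succ i =>
    refine Prod.ext (Subtype.ext ?_) rfl
    change insertLetter q true (j + 1) (insertLetter q true (i + 1) v) =
      insertLetter q true (i + 1) (insertLetter q true ((j + q : ℕ) + 1) v)
    rw [insertLetter_insertLetter (by omega) v.2]
    congr 2
    push_cast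
    ring

/-- The action of `F(q + 1)` on the pairs `(v, t)` of `generatorPerm`. -/
def thompsonAction : FP (q + 1) →* Equiv.Perm (NormalForm q × ℤ) :=
  PresentedGroup.toGroup (f := generatorPerm q) <| by
    rintro _ ⟨i, j, hij, rfl⟩
    simp only [map_mul, map_inv, FreeGroup.lift_apply_of, generatorPerm_mul_generatorPerm q hij]
    exact mul_inv_eq_one.2 (mul_inv_cancel_right _ _)

theorem thompsonAction_mk_cons (a : ℕ × Bool) (w : List (ℕ × Bool)) :
    thompsonAction q (PresentedGroup.mk _ (FreeGroup.mk (a :: w))) =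
      cond a.2 (generatorPerm q a.1) (generatorPerm q a.1)⁻¹ *
        thompsonAction q (PresentedGroup.mk _ (FreeGroup.mk w)) := by
  change FreeGroup.lift (generatorPerm q) (FreeGroup.mk (a :: w)) =
    _ * FreeGroup.lift (generatorPerm q) (FreeGroup.mk w)
  simp only [FreeGroup.lift_mk, List.map_cons, List.prod_cons]

end Action

section NonzeroPart

variable {q : ℕ} {w : List (ℕ × Bool)}

/-- The letters that remain in front when all letters `x_0^{±1}` of a word are moved to its right
end by means of `x_0 x_{j+q} = x_j x_0`. -/
def nonzeroPart (q : ℕ) : List (ℕ × Bool) → List (ℤ × Bool)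
  | [] => []
  | (0, true) :: w => shift (-q) (nonzeroPart q w)
  | (0, false) :: w => shift q (nonzeroPart q w)
  | (a + 1, e) :: w => (a + 1, e) :: nonzeroPart q w

/-- The exponent sum of `x_0` in a word. -/
def zeroExponent : List (ℕ × Bool) → ℤ
  | [] => 0
  | (0, true) :: w => zeroExponent w + 1
  | (0, false) :: w => zeroExponent w - 1
  | (_ + 1, _) :: w => zeroExponent w

theorem isNormal_nonzeroPart_of_cons {a : ℕ × Bool} (h : IsNormal q (nonzeroPart q (a :: w))) :
    IsNormal q (nonzeroPart q w) := by
  obtain ⟨_ | a, _ | _⟩ := a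
  · simpa [shift_shift, shift_zero, nonzeroPart] using h.shift (-q)
  · simpa [shift_shift, shift_zero, nonzeroPart] using h.shift q
  · exact h.tail
  · exact h.tail

/-- No cancellation occurs while the letters of `w` act one after the other. -/
theorem thompsonAction_mk_nil (h : IsNormal q (nonzeroPart q w)) :
    thompsonAction q (PresentedGroup.mk _ (FreeGroup.mk w)) (⟨[], List.isChain_nil⟩, 0) =
      (⟨nonzeroPart q w, h⟩, zeroExponent w) := by
  induction w with
  | nil =>
    rw [← FreeGroup.one_eq_mk, map_one, map_one]
    rfl
  | cons a w ih =>
    rw [thompsonAction_mk_cons, Equiv.Perm.mul_apply, ih (isNormal_nonzeroPart_of_cons h)]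
    obtain ⟨_ | a, _ | _⟩ := a
    · exact Prod.ext (Subtype.ext (congrArg (shift · _) (neg_neg _))) rfl
    · rfl
    · exact Prod.ext (Subtype.ext (insertLetter_eq_cons h)) rfl
    · exact Prod.ext (Subtype.ext (insertLetter_eq_cons h)) rfl

/-- The element `x_0^k x_a x_0^{-k}` with `1 ≤ a ≤ q` and `a - k q = j`, which equals `x_j` once
the generators of `F(q + 1)` are indexed by `ℤ`. -/
def conjGenerator (q : ℕ) (j : ℤ) : FreeGroup ℕ :=
  MulAut.conj (FreeGroup.of 0 ^ (-((j - 1) / q))) (FreeGroup.of (((j - 1) % q).toNat + 1))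

theorem conjGenerator_natCast_succ {a : ℕ} (ha : a < q) :
    conjGenerator q (a + 1) = FreeGroup.of (a + 1) := by
  have hdiv : (a : ℤ) / q = 0 := Int.ediv_eq_zero_of_lt (by omega) (by omega)
  have hmod : (a : ℤ) % q = a := Int.emod_eq_of_lt (by omega) (by omega)
  simp [conjGenerator, hdiv, hmod]

theorem conjGenerator_add_natCast (hq : q ≠ 0) (j : ℤ) :
    conjGenerator q (j + q) = (FreeGroup.of 0)⁻¹ * conjGenerator q j * FreeGroup.of 0 := by
  have hdiv : (j + q - 1) / (q : ℤ) = (j - 1) / q + 1 := by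
    rw [add_sub_right_comm, Int.add_ediv_of_dvd_right dvd_rfl, Int.ediv_self (by omega)]
  have hmod : (j + q - 1) % (q : ℤ) = (j - 1) % q := by
    rw [add_sub_right_comm, Int.add_emod_right]
  simp only [conjGenerator, hdiv, hmod, MulAut.conj_apply]
  group

theorem lift_conjGenerator_shift (hq : q ≠ 0) (v : List (ℤ × Bool)) :
    FreeGroup.lift (conjGenerator q) (FreeGroup.mk (shift q v)) =
      (FreeGroup.of 0)⁻¹ * FreeGroup.lift (conjGenerator q) (FreeGroup.mk v) * FreeGroup.of 0 := by
  have hhom : (FreeGroup.lift (conjGenerator q)).comp (FreeGroup.map (· + (q : ℤ))) =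
      (MulAut.conj (FreeGroup.of 0)⁻¹).toMonoidHom.comp (FreeGroup.lift (conjGenerator q)) := by
    ext1 j
    simp [conjGenerator_add_natCast hq]
  simpa [FreeGroup.map.mk, shift] using DFunLike.congr_fun hhom (FreeGroup.mk v)

theorem lift_conjGenerator_nonzeroPart (hq : q ≠ 0) (hw : ∀ a ∈ w, a.1 ≤ q) :
    FreeGroup.lift (conjGenerator q) (FreeGroup.mk (nonzeroPart q w)) *
      FreeGroup.of 0 ^ zeroExponent w = FreeGroup.mk w := by
  induction w with
  | nil => rfl
  | cons a w ih =>
    have hcons : FreeGroup.mk (a :: w) =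
        cond a.2 (FreeGroup.of a.1) (FreeGroup.of a.1)⁻¹ * FreeGroup.mk w := by
      obtain ⟨a, _ | _⟩ := a <;> rfl
    rw [hcons, ← ih fun b hb => hw b (List.mem_cons_of_mem _ hb)]
    obtain ⟨_ | a, _ | _⟩ := a
    · simp only [nonzeroPart, zeroExponent, lift_conjGenerator_shift hq, cond_false]
      group
    · have hshift := lift_conjGenerator_shift hq (shift (-q) (nonzeroPart q w))
      rw [shift_shift, neg_add_cancel, shift_zero] at hshift
      simp only [nonzeroPart, zeroExponent, hshift, cond_true]
      group
    · have ha : a < q := hw _ List.mem_cons_self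
      simp [nonzeroPart, zeroExponent, FreeGroup.lift_mk, conjGenerator_natCast_succ ha, mul_assoc]
    · have ha : a < q := hw _ List.mem_cons_self
      simp [nonzeroPart, zeroExponent, FreeGroup.lift_mk, conjGenerator_natCast_succ ha, mul_assoc]

theorem mk_eq_mk_of_nonzeroPart_eq {w' : List (ℕ × Bool)} (hq : q ≠ 0) (hw : ∀ a ∈ w, a.1 ≤ q)
    (hw' : ∀ a ∈ w', a.1 ≤ q) (hpart : nonzeroPart q w = nonzeroPart q w')
    (hexp : zeroExponent w = zeroExponent w') : FreeGroup.mk w = FreeGroup.mk w' := by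
  rw [← lift_conjGenerator_nonzeroPart hq hw, ← lift_conjGenerator_nonzeroPart hq hw', hpart, hexp]

theorem head?_shift (s : ℤ) (v : List (ℤ × Bool)) :
    (shift s v).head? = v.head?.map fun a => (a.1 + s, a.2) := List.head?_map

/-- The first alternative is that `w` starts with a negative power of `x_0`. -/
theorem head_nonzeroPart (hred : FreeGroup.IsReduced w) (hw : ∀ a ∈ w, a.1 ≤ q) {b : ℤ × Bool}
    (hb : b ∈ (nonzeroPart q w).head?) :
    (q < b.1 ∧ (0, false) ∈ w.head?) ∨ ∃ k c : ℕ, 1 ≤ c ∧ c ≤ q ∧ b.1 = c - k * q ∧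
      List.replicate k (0, true) ++ [(c, b.2)] <+: w := by
  induction w generalizing b with
  | nil => simp [nonzeroPart] at hb
  | cons a w ih =>
    have hw' : ∀ a ∈ w, a.1 ≤ q := fun a ha => hw a (List.mem_cons_of_mem _ ha)
    have hhead := (List.isChain_cons.1 hred).1
    obtain ⟨_ | a, _ | _⟩ := a
    · left
      rw [nonzeroPart, head?_shift, Option.mem_map] at hb
      obtain ⟨c, hc, rfl⟩ := hb
      rcases ih hred.tail hw' hc with ⟨hlt, -⟩ | ⟨_ | k, n, hn, -, hcn, t, rfl⟩
      · exact ⟨by simp only; omega, rfl⟩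
      · exact ⟨by simp only [hcn]; omega, rfl⟩
      · exact absurd (hhead (0, true) rfl) (by simp)
    · right
      rw [nonzeroPart, head?_shift, Option.mem_map] at hb
      obtain ⟨c, hc, rfl⟩ := hb
      rcases ih hred.tail hw' hc with ⟨-, hneg⟩ | ⟨k, n, hn, hnq, hcn, hpre⟩
      · exact absurd (hhead _ hneg) (by simp)
      · exact ⟨k + 1, n, hn, hnq, by simp only [hcn]; push_cast; ring,
          List.cons_prefix_cons.2 ⟨rfl, hpre⟩⟩
    all_goals
      right
      obtain rfl : _ = b := Option.mem_some.1 hb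
      exact ⟨0, a + 1, by omega, hw _ List.mem_cons_self, by simp, List.prefix_append [_] w⟩

/-- Parts (2)–(5) of `Forbidden` describe the words `x_a^{±1} x_0^k x_c^{±1}` in which `x_a^{±1}`
can be moved past `x_{c-kq}^{±1} = x_0^k x_c^{±1} x_0^{-k}`. -/
theorem forbidden_of_passes {a c k : ℕ} {d e : Bool} (ha : 1 ≤ a) (haq : a ≤ q) (hc : 1 ≤ c)
    (hcq : c ≤ q) (h : Passes q a ((c : ℤ) - k * q, d)) :
    Forbidden (q + 1) ((a, e) :: (List.replicate k (0, true) ++ [(c, d)])) := by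
  obtain ⟨hlt, hslide⟩ := h
  rcases lt_or_ge c a with hca | hac <;> cases d <;>
    simp only [slide, cond_true, cond_false] at hlt hslide
  · obtain ⟨k, rfl⟩ := Nat.exists_eq_succ_of_ne_zero (n := k) (by rintro rfl; omega)
    exact .inr (.inr (.inl ⟨a, c, k, e, hc, hca, haq, rfl⟩))
  · exact .inr (.inl ⟨a, c, k, e, hc, hca, haq, rfl⟩)
  · obtain ⟨k, rfl⟩ := Nat.exists_eq_add_of_le' (m := 2) (n := k)
      (by by_contra! hk; interval_cases k <;> omega)
    exact .inr (.inr (.inr (.inr ⟨a, c, k, e, ha, hac, hcq, rfl⟩)))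
  · obtain ⟨k, rfl⟩ := Nat.exists_eq_succ_of_ne_zero (n := k) (by rintro rfl; omega)
    exact .inr (.inr (.inr (.inl ⟨a, c, k, e, ha, hac, hcq, rfl⟩)))

end NonzeroPart

namespace NFin

variable {p q : ℕ} {w w' : List (ℕ × Bool)}

theorem tail {a : ℕ × Bool} (h : NFin p (a :: w)) : NFin p w :=
  ⟨fun b hb => h.1 b (List.mem_cons_of_mem _ hb),
    fun u hu => h.2 u (hu.trans (List.suffix_cons a w).isInfix)⟩

theorem fst_le (h : NFin (q + 1) w) : ∀ a ∈ w, a.1 ≤ q := h.1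

theorem isReduced (h : NFin p w) : FreeGroup.IsReduced w := by
  refine List.isChain_iff_forall_rel_of_append_cons_cons.2 ?_
  rintro ⟨i, d⟩ ⟨j, e⟩ l l' rfl hij
  by_contra hde
  obtain rfl : i = j := hij
  obtain rfl : e = !d := Bool.eq_not.2 (Ne.symm hde)
  exact h.2 [(i, d), (i, !d)] ⟨l, l', by simp⟩ (.inl ⟨i, d, h.1 (i, d) (by simp), rfl⟩)

theorem compatible_of_mem_head? {a : ℕ} {e : Bool} {b : ℤ × Bool} (ha : 1 ≤ a)
    (h : NFin (q + 1) ((a, e) :: w)) (hb : b ∈ (nonzeroPart q w).head?) :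
    Compatible q (a, e) b := by
  have haq : a ≤ q := h.fst_le (a, e) List.mem_cons_self
  obtain ⟨j, d⟩ := b
  rcases head_nonzeroPart h.tail.isReduced h.tail.fst_le hb with
    ⟨hlt, -⟩ | ⟨k, c, hc, hcq, rfl, hpre⟩
  · have haj : (a : ℤ) < j := lt_of_le_of_lt (mod_cast haq) hlt
    exact ⟨fun h => absurd h haj.ne, fun h => absurd h.1 haj.not_gt⟩
  · have hinfix := (List.cons_prefix_cons.2 ⟨rfl, hpre⟩ : _ <+: (a, e) :: w).isInfix
    refine ⟨fun hac => ?_, fun hpass => h.2 _ hinfix (forbidden_of_passes ha haq hc hcq hpass)⟩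
    obtain rfl : k = 0 := by
      by_contra hk
      have hqk : (q : ℤ) ≤ k * q := le_mul_of_one_le_left (by omega) (by omega)
      simp only at hac
      omega
    exact (FreeGroup.isReduced_cons_cons.1 (h.isReduced.infix hinfix)).1 (by simpa using hac)

theorem isNormal_nonzeroPart (h : NFin (q + 1) w) : IsNormal q (nonzeroPart q w) := by
  induction w with
  | nil => exact List.isChain_nil
  | cons a w ih =>
    obtain ⟨_ | a, _ | _⟩ := a
    · exact (ih h.tail).shift q
    · exact (ih h.tail).shift (-q)
    all_goals
      exact List.isChain_cons.2
        ⟨fun b hb => mod_cast h.compatible_of_mem_head? a.succ_pos hb, ih h.tail⟩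

theorem eq_of_mk_eq_mk (hq : q ≠ 0) (h : NFin (q + 1) w) (h' : NFin (q + 1) w')
    (heq : PresentedGroup.mk (ThompsonRels (q + 1)) (FreeGroup.mk w) =
      PresentedGroup.mk (ThompsonRels (q + 1)) (FreeGroup.mk w')) : w = w' := by
  have hact := thompsonAction_mk_nil h.isNormal_nonzeroPart
  rw [heq, thompsonAction_mk_nil h'.isNormal_nonzeroPart, Prod.mk.injEq, Subtype.mk.injEq] at hact
  have hfree := mk_eq_mk_of_nonzeroPart_eq hq h'.fst_le h.fst_le hact.1 hact.2
  rw [← h.isReduced.reduce_eq, ← h'.isReduced.reduce_eq, FreeGroup.reduce.sound hfree]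

end NFin

section WordLength

variable {p : ℕ}

theorem xgen_mul_xgen {i j : ℕ} (hij : i < j) :
    xgen p j * xgen p i = xgen p i * xgen p (j + p - 1) :=
  PresentedGroup.mk_eq_mk_of_mul_inv_mem (x := FreeGroup.of j * FreeGroup.of i)
    (y := FreeGroup.of i * FreeGroup.of (j + p - 1))
    ⟨i, j, hij, by simp only [mul_inv_rev, mul_assoc]⟩

theorem xgen_mem_closure (hp : 2 ≤ p) (i : ℕ) :
    xgen p i ∈ Subgroup.closure (xgen p '' Set.Iio p) := by
  induction i using Nat.strong_induction_on with
  | _ i ih =>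
    rcases lt_or_ge i p with hi | hi
    · exact Subgroup.subset_closure ⟨i, hi, rfl⟩
    · have hconj : xgen p i = (xgen p 0)⁻¹ * (xgen p (i - (p - 1)) * xgen p 0) := by
        rw [xgen_mul_xgen (by omega), inv_mul_cancel_left]
        congr 1
        omega
      rw [hconj]
      exact mul_mem (inv_mem (ih 0 (by omega))) (mul_mem (ih _ (by omega)) (ih 0 (by omega)))

theorem closure_xgen_eq_top (hp : 2 ≤ p) : Subgroup.closure (xgen p '' Set.Iio p) = ⊤ := by
  rw [eq_top_iff, ← PresentedGroup.closure_range_of, Subgroup.closure_le]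
  rintro _ ⟨i, rfl⟩
  exact xgen_mem_closure hp i

/-- The generating set `{x_0^{±1}, …, x_{p-1}^{±1}}` of `F(p)` with respect to which `wlen` is
defined. -/
def symmGenerators (p : ℕ) : Set (FP p) := {a | ∃ i < p, a = xgen p i ∨ a = (xgen p i)⁻¹}

theorem finite_symmGenerators (p : ℕ) : (symmGenerators p).Finite := by
  refine (((Set.finite_Iio p).image (xgen p)).union
    ((Set.finite_Iio p).image fun i => (xgen p i)⁻¹)).subset ?_
  rintro a ⟨i, hi, rfl | rfl⟩
  · exact .inl ⟨i, hi, rfl⟩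
  · exact .inr ⟨i, hi, rfl⟩

theorem exists_list_symmGenerators_prod_eq (hp : 2 ≤ p) (g : FP p) :
    ∃ l : List (FP p), (∀ a ∈ l, a ∈ symmGenerators p) ∧ l.prod = g := by
  have hg : g ∈ (Subgroup.closure (xgen p '' Set.Iio p)).toSubmonoid := by
    simp [closure_xgen_eq_top hp]
  rw [Subgroup.closure_toSubmonoid] at hg
  obtain ⟨l, hl, hprod⟩ := Submonoid.exists_list_of_mem_closure hg
  refine ⟨l, fun a ha => ?_, hprod⟩
  rcases hl a ha with ⟨i, hi, h⟩ | ⟨i, hi, h⟩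
  · exact ⟨i, hi, .inl h.symm⟩
  · exact ⟨i, hi, .inr (inv_eq_iff_eq_inv.1 h.symm)⟩

theorem exists_list_length_eq_wlen (hp : 2 ≤ p) (g : FP p) :
    ∃ l : List (FP p), l.length = wlen p g ∧ (∀ a ∈ l, a ∈ symmGenerators p) ∧ l.prod = g := by
  obtain ⟨l, hl, hprod⟩ := exists_list_symmGenerators_prod_eq hp g
  exact Nat.sInf_mem (s := {n | ∃ l : List (FP p), l.length = n ∧
    (∀ a ∈ l, a ∈ symmGenerators p) ∧ l.prod = g}) ⟨l.length, l, rfl, hl, hprod⟩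

theorem wlen_mk_le {w : List (ℕ × Bool)} (hw : ∀ a ∈ w, a.1 < p) :
    wlen p (PresentedGroup.mk _ (FreeGroup.mk w)) ≤ w.length := by
  refine Nat.sInf_le ⟨w.map fun a => cond a.2 (xgen p a.1) (xgen p a.1)⁻¹,
    List.length_map _, ?_, ?_⟩
  · simp only [List.mem_map]
    rintro _ ⟨⟨i, _ | _⟩, hi, rfl⟩
    · exact ⟨i, hw _ hi, .inr rfl⟩
    · exact ⟨i, hw _ hi, .inl rfl⟩
  · rw [← FreeGroup.lift_mk]
    exact DFunLike.congr_fun (FreeGroup.ext_hom (FreeGroup.lift (xgen p)) (PresentedGroup.mk _)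
      fun i => FreeGroup.lift_apply_of) (FreeGroup.mk w)

theorem finite_setOf_list_length_le {α : Type*} {s : Set α} (hs : s.Finite) (n : ℕ) :
    {l : List α | l.length ≤ n ∧ ∀ a ∈ l, a ∈ s}.Finite := by
  have := hs.to_subtype
  refine ((List.finite_length_le s n).image (List.map Subtype.val)).subset ?_
  rintro l ⟨hn, hl⟩
  lift l to List s using hl
  exact ⟨l, by simpa using hn, rfl⟩

theorem finite_setOf_wlen_le (hp : 2 ≤ p) (n : ℕ) : {g : FP p | wlen p g ≤ n}.Finite := by
  refine ((finite_setOf_list_length_le (finite_symmGenerators p) n).image List.prod).subset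
    fun g hg => ?_
  obtain ⟨l, hlen, hl, hprod⟩ := exists_list_length_eq_wlen hp g
  exact ⟨l, ⟨hlen.trans_le hg, hl⟩, hprod⟩

end WordLength

/-- Each word of length at most `n` in `N_fin(p)` represents an element at
distance at most `n` from the identity, so the number of such words is at most
the cardinality of the ball `B(n)` in `F(p)`. -/
theorem stmt17 (p : ℕ) (hp : 2 ≤ p) (n : ℕ) :
    Nat.card {w : List (ℕ × Bool) // w.length ≤ n ∧ NFin p w} ≤
      Nat.card {g : FP p // wlen p g ≤ n} := by
  obtain ⟨q, rfl⟩ : ∃ q, p = q + 1 := ⟨p - 1, by omega⟩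
  have : Finite {g : FP (q + 1) // wlen (q + 1) g ≤ n} := (finite_setOf_wlen_le hp n).to_subtype
  have hball (w : {w : List (ℕ × Bool) // w.length ≤ n ∧ NFin (q + 1) w}) :
      wlen (q + 1) (PresentedGroup.mk _ (FreeGroup.mk w.1)) ≤ n :=
    (wlen_mk_le fun a ha => Nat.lt_succ_of_le (w.2.2.1 a ha)).trans w.2.1
  refine Nat.card_le_card_of_injective (fun w => ⟨_, hball w⟩) fun w w' heq => Subtype.ext ?_
  exact w.2.2.eq_of_mk_eq_mk (by omega) w'.2.2 (congrArg Subtype.val heq)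
end

section
/- Let ξ be a real number with ξ > 1 satisfying (2ξ − 1)·(ξ − 1)^{p−1} = ξ^p. Then the growth rate of the generalized Thompson group F(p) with respect to the generators {x_0, …, x_{p-1}} is at least ξ: lim_{n→∞} (#B(n))^{1/n} ≥ ξ (equivalently, liminf_{n→∞} (#B(n))^{1/n} ≥ ξ). -/
/-!
Conjugation by `x_0` shifts the index of `x_i`, `i ≥ 1`, by `d = p - 1`. Hence `F(p)` acts on the
normal forms of an ambient group with generators `X_i`, `i ∈ ℤ`: there `x_0` translates all the
indices, and `x_i` for `i ≥ 1` multiplies by `X_i`. The admissible successions of letters form a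
graph for which this action plays ping-pong: a point reached along a path from a given vertex tells,
by the first letter of its normal form, which edge the path starts with. Thus distinct paths give
distinct points, and so distinct elements of the group.

The number of paths of length `n` is at least a constant times `ξ ^ n`, since the adjacency matrix
of the graph has a positive eigenvector with eigenvalue `ξ`. Its entries are `1` and `q ^ i - 1` for
`1 ≤ i ≤ d`, with `q = ξ / (ξ - 1)`, and the equation for `ξ` becomes `ξ * q ^ d = 2 * ξ - 1`.
-/

section Growth

open Filter Topology

theorem le_liminf_rpow_inv {a : ℕ → ℝ} {c ξ K : ℝ} (hc : 0 < c) (hξ : 0 ≤ ξ) (hK : 0 ≤ K)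
    (lower : ∀ᶠ n in atTop, c * ξ ^ n ≤ a n) (upper : ∀ᶠ n in atTop, a n ≤ K ^ n) :
    ξ ≤ liminf (fun n : ℕ ↦ a n ^ (n : ℝ)⁻¹) atTop := by
  have lim : Tendsto (fun n : ℕ ↦ c ^ (n : ℝ)⁻¹ * ξ) atTop (𝓝 ξ) := by
    simpa using ((tendsto_const_nhds (x := c)).rpow
      (tendsto_inv_atTop_nhds_zero_nat (𝕜 := ℝ)) (.inl hc.ne')).mul_const ξ
  rw [← lim.liminf_eq]
  refine liminf_le_liminf ?_ lim.isBoundedUnder_ge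
    (isBoundedUnder_of_eventually_le (a := K) ?_).isCoboundedUnder_ge
  · filter_upwards [lower, eventually_ne_atTop 0] with n hn hn0
    calc c ^ (n : ℝ)⁻¹ * ξ = (c * ξ ^ n) ^ (n : ℝ)⁻¹ := by
          rw [Real.mul_rpow hc.le (by positivity), Real.pow_rpow_inv_natCast hξ hn0]
      _ ≤ a n ^ (n : ℝ)⁻¹ := Real.rpow_le_rpow (by positivity) hn (by positivity)
  · filter_upwards [lower, upper, eventually_ne_atTop 0] with n hn hn' hn0
    have ha : 0 ≤ a n := le_trans (by positivity) hn
    calc a n ^ (n : ℝ)⁻¹ ≤ (K ^ n) ^ (n : ℝ)⁻¹ := Real.rpow_le_rpow ha hn' (by positivity)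
      _ = K := Real.pow_rpow_inv_natCast hK hn0

end Growth

section SetPow

open scoped Pointwise

theorem mem_set_pow_iff_exists_list {M : Type*} [Monoid M] {S : Set M} {n : ℕ} {g : M} :
    g ∈ S ^ n ↔ ∃ l : List M, l.length = n ∧ (∀ a ∈ l, a ∈ S) ∧ l.prod = g := by
  rw [Set.mem_pow]
  constructor
  · rintro ⟨f, rfl⟩
    exact ⟨_, List.length_ofFn, by simp, rfl⟩
  · rintro ⟨l, rfl, hl, rfl⟩
    exact ⟨fun i ↦ ⟨l[i], hl _ (List.getElem_mem _)⟩, by simp⟩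

theorem finite_set_pow {M : Type*} [Monoid M] {S : Set M} (hS : S.Finite) (n : ℕ) :
    (S ^ n).Finite := by
  classical
  lift S to Finset M using hS
  exact Finset.coe_pow S n ▸ Finset.finite_toSet _

theorem ncard_set_pow_le {M : Type*} [Monoid M] {S : Set M} (hS : S.Finite) (n : ℕ) :
    (S ^ n).ncard ≤ S.ncard ^ n := by
  classical
  lift S to Finset M using hS
  rw [← Finset.coe_pow, Set.ncard_coe_finset, Set.ncard_coe_finset]
  exact Finset.card_pow_le

theorem exists_mem_pow_of_closure_eq_top {G : Type*} [Group G] {S : Set G}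
    (hS : Subgroup.closure S = ⊤) (g : G) : ∃ n, g ∈ (S ∪ S⁻¹) ^ n := by
  have hg : g ∈ Submonoid.closure (S ∪ S⁻¹) := by
    rw [← Subgroup.closure_toSubmonoid, hS]
    trivial
  obtain ⟨l, hl, hprod⟩ := Submonoid.exists_list_of_mem_closure hg
  exact ⟨l.length, mem_set_pow_iff_exists_list.2 ⟨l, rfl, hl, hprod⟩⟩

end SetPow

section PingPong

variable {σ α : Type*} {next : σ → Finset σ} {f : σ → α → α} {base : σ → α} {dom im : σ → Set α}

/-- Ping-pong along a directed graph with out-neighbours `next`: following an edge into the vertex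
`s` applies `f s`, whose image `im s` is again in the domain of every in-neighbour of `s`, and the
images attached to distinct out-neighbours of a vertex are disjoint. -/
structure IsPingPong (next : σ → Finset σ) (f : σ → α → α) (dom im : σ → Set α) : Prop where
  mapsTo : ∀ s, Set.MapsTo (f s) (dom s) (im s)
  injOn : ∀ s, Set.InjOn (f s) (dom s)
  im_subset_dom : ∀ s, ∀ a ∈ next s, im a ⊆ dom s
  pairwiseDisjoint : ∀ s, (next s : Set σ).PairwiseDisjoint im

variable [DecidableEq α]

/-- The points `f a₁ (f a₂ (⋯ (f aₙ (base aₙ))))` for the paths `s → a₁ → a₂ → ⋯ → aₙ` of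
length `n` out of `s`, where `aₙ` is read as `s` if `n = 0`. -/
def pathPoints (next : σ → Finset σ) (f : σ → α → α) (base : σ → α) : ℕ → σ → Finset α
  | 0, s => {base s}
  | n + 1, s => (next s).biUnion fun a ↦ (pathPoints next f base n a).image (f a)

open scoped Pointwise in
theorem pathPoints_subset_pow_smul {M : Type*} [Monoid M] [MulAction M α] {label : σ → M}
    {S : Set M} {B : Set α} (hS : ∀ s, label s ∈ S) (hB : ∀ s, base s ∈ B) (n : ℕ) (s : σ) :
    (pathPoints next (fun a x ↦ label a • x) base n s : Set α) ⊆ S ^ n • B := by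
  induction n generalizing s with
  | zero => simpa [pathPoints] using hB s
  | succ n ih =>
    simp only [pathPoints, Finset.coe_biUnion, Finset.coe_image, Set.iUnion_subset_iff,
      Set.image_subset_iff]
    intro a _ x hx
    rw [pow_succ', mul_smul]
    exact Set.smul_mem_smul (hS a) (ih a hx)

namespace IsPingPong

theorem pathPoints_subset_dom (h : IsPingPong next f dom im) (hbase : ∀ s, base s ∈ dom s)
    (n : ℕ) (s : σ) : (pathPoints next f base n s : Set α) ⊆ dom s := by
  induction n generalizing s with
  | zero => simpa [pathPoints] using hbase s
  | succ n ih =>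
    simp only [pathPoints, Finset.coe_biUnion, Finset.coe_image, Set.iUnion_subset_iff]
    exact fun a ha ↦ ((h.mapsTo a).mono_left (ih a)).image_subset.trans (h.im_subset_dom s a ha)

theorem card_pathPoints_succ (h : IsPingPong next f dom im) (hbase : ∀ s, base s ∈ dom s)
    (n : ℕ) (s : σ) :
    (pathPoints next f base (n + 1) s).card = ∑ a ∈ next s, (pathPoints next f base n a).card := by
  have hdom := h.pathPoints_subset_dom hbase n
  rw [pathPoints, Finset.card_biUnion]
  · exact Finset.sum_congr rfl fun a _ ↦ Finset.card_image_of_injOn ((h.injOn a).mono (hdom a))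
  · intro a ha a' ha' hne
    rw [Function.onFun, ← Finset.disjoint_coe, Finset.coe_image, Finset.coe_image]
    exact (h.pairwiseDisjoint s ha ha' hne).mono ((h.mapsTo a).mono_left (hdom a)).image_subset
      ((h.mapsTo a').mono_left (hdom a')).image_subset

theorem mul_pow_le_card_pathPoints (h : IsPingPong next f dom im) (hbase : ∀ s, base s ∈ dom s)
    {w : σ → ℝ} {ξ C : ℝ} (hξ : 0 ≤ ξ) (hwC : ∀ s, w s ≤ C)
    (hw : ∀ s, ξ * w s ≤ ∑ a ∈ next s, w a) (n : ℕ) (s : σ) :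
    w s * ξ ^ n ≤ C * (pathPoints next f base n s).card := by
  induction n generalizing s with
  | zero => simpa [pathPoints] using hwC s
  | succ n ih =>
    calc w s * ξ ^ (n + 1) = ξ * w s * ξ ^ n := by ring
      _ ≤ (∑ a ∈ next s, w a) * ξ ^ n := by gcongr; exact hw s
      _ = ∑ a ∈ next s, w a * ξ ^ n := Finset.sum_mul _ _ _
      _ ≤ ∑ a ∈ next s, C * (pathPoints next f base n a).card :=
        Finset.sum_le_sum fun a _ ↦ ih a
      _ = C * (pathPoints next f base (n + 1) s).card := by
        rw [h.card_pathPoints_succ hbase, Nat.cast_sum, Finset.mul_sum]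

end IsPingPong

end PingPong

namespace ThompsonGroup

/-- A letter `X_i^{±1}`, with `i ∈ ℤ`, of the ambient group in which `X_j X_i = X_i X_{j+d}`
for all integers `i < j`. For `d = p - 1` it contains `x_i = X_i` for `i ≥ 1`, while `x_0` acts on
it by conjugation as the translation `X_i ↦ X_{i-d}`. -/
@[ext]
structure Letter where
  index : ℤ
  positive : Bool
  deriving DecidableEq

namespace Letter

instance : InvolutiveInv Letter where
  inv a := ⟨a.index, !a.positive⟩
  inv_inv a := by ext <;> simp

instance : AddAction ℤ Letter where
  vadd e a := ⟨e + a.index, a.positive⟩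
  zero_vadd _ := Letter.ext (zero_add _) rfl
  add_vadd _ _ _ := Letter.ext (add_assoc _ _ _) rfl

@[simp] theorem index_inv (a : Letter) : a⁻¹.index = a.index := rfl

@[simp] theorem positive_inv (a : Letter) : a⁻¹.positive = !a.positive := rfl

@[simp] theorem index_vadd (e : ℤ) (a : Letter) : (e +ᵥ a).index = e + a.index := rfl

theorem vadd_inv (e : ℤ) (a : Letter) : (e +ᵥ a)⁻¹ = e +ᵥ a⁻¹ := rfl

/-- The translation amount `e` in the relation `a b = (e +ᵥ b) a`, valid when
`a.bound d < b.index`. -/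
def jump (d : ℕ) (a : Letter) : ℤ := if a.positive then -d else d

/-- The letters `b` that may follow `a` in a normal form have index at most `a.bound d`; those of
larger index are moved to the left of `a`. -/
def bound (d : ℕ) (a : Letter) : ℤ := if a.positive then a.index + d else a.index

variable {d : ℕ}

@[simp] theorem jump_vadd (e : ℤ) (a : Letter) : (e +ᵥ a).jump d = a.jump d := rfl

@[simp] theorem jump_inv (a : Letter) : a⁻¹.jump d = -a.jump d := by
  obtain ⟨i, _ | _⟩ := a <;> simp [jump]

@[simp] theorem bound_vadd (e : ℤ) (a : Letter) : (e +ᵥ a).bound d = e + a.bound d := by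
  obtain ⟨i, _ | _⟩ := a <;> simp [bound, add_assoc]

@[simp] theorem bound_inv (a : Letter) : a⁻¹.bound d = a.jump d + a.bound d := by
  obtain ⟨i, _ | _⟩ := a <;> simp [bound, jump, add_comm]

theorem index_le_bound (a : Letter) : a.index ≤ a.bound d := by
  obtain ⟨i, _ | _⟩ := a <;> simp [bound]

theorem index_le_jump_add_bound (a : Letter) : a.index ≤ a.jump d + a.bound d := by
  simpa using a⁻¹.index_le_bound (d := d)

/-- The two-letter word `a b` is in normal form. -/
def Reduced (d : ℕ) (a b : Letter) : Prop := b.index ≤ a.bound d ∧ b ≠ a⁻¹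

theorem Reduced.vadd {a b : Letter} (h : Reduced d a b) (e : ℤ) :
    Reduced d (e +ᵥ a) (e +ᵥ b) := by
  refine ⟨by simpa using h.1, ?_⟩
  rw [vadd_inv, Ne, vadd_left_cancel_iff]
  exact h.2

theorem eq_inv_or_reduced_or_bound_lt (d : ℕ) (a b : Letter) :
    b = a⁻¹ ∨ Reduced d a b ∨ a.bound d < b.index := by
  unfold Reduced
  by_cases h : b = a⁻¹
  · exact .inl h
  · exact .inr ((le_or_gt b.index (a.bound d)).imp_left (⟨·, h⟩))

theorem reduced_of_index_lt {a b : Letter} (h : b.index < a.index) : Reduced d a b := by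
  refine ⟨h.le.trans a.index_le_bound, ?_⟩
  rintro rfl
  exact h.false

theorem reduced_jump_vadd_of_index_le {a b c : Letter} (h : a.bound d < b.index)
    (hc : c.index ≤ a.jump d + a.bound d) : Reduced d (a.jump d +ᵥ b) c :=
  reduced_of_index_lt (by simp only [index_vadd]; omega)

theorem reduced_jump_vadd_self {a b : Letter} (h : a.bound d < b.index) :
    Reduced d (a.jump d +ᵥ b) a :=
  reduced_jump_vadd_of_index_le h a.index_le_jump_add_bound

/-- The normal form of `a w`, for a word `w` in normal form. -/
def prepend (d : ℕ) (a : Letter) : List Letter → List Letter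
  | [] => [a]
  | b :: w =>
    if b = a⁻¹ then w
    else if b.index ≤ a.bound d then a :: b :: w
    else (a.jump d +ᵥ b) :: prepend d a w

theorem prepend_inv_cons (a : Letter) (w : List Letter) : prepend d a (a⁻¹ :: w) = w := by
  simp [prepend]

theorem inv_prepend_cons (a : Letter) (w : List Letter) : prepend d a⁻¹ (a :: w) = w := by
  simp [prepend]

theorem prepend_of_reduced {a : Letter} {w : List Letter} (h : ∀ b ∈ w.head?, Reduced d a b) :
    prepend d a w = a :: w := by
  cases w with
  | nil => rfl
  | cons b w =>
    obtain ⟨hle, hne⟩ := h b rfl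
    rw [prepend, if_neg hne, if_pos hle]

theorem prepend_of_bound_lt {a b : Letter} (h : a.bound d < b.index) (w : List Letter) :
    prepend d a (b :: w) = (a.jump d +ᵥ b) :: prepend d a w := by
  have hne : b ≠ a⁻¹ := by
    rintro rfl
    exact (a.index_le_bound.trans_lt h).false
  rw [prepend, if_neg hne, if_neg h.not_ge]

theorem map_vadd_prepend (e : ℤ) (a : Letter) (w : List Letter) :
    (prepend d a w).map (e +ᵥ ·) = prepend d (e +ᵥ a) (w.map (e +ᵥ ·)) := by
  induction w with
  | nil => rfl
  | cons b w ih =>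
    simp only [prepend, List.map_cons, vadd_inv, vadd_left_cancel_iff, bound_vadd, index_vadd,
      add_le_add_iff_left, jump_vadd, ← ih, vadd_vadd, add_comm (a.jump d)]
    split_ifs <;> simp [vadd_vadd]

theorem reduced_head_prepend {a b : Letter} (h : a.bound d < b.index) {w : List Letter}
    (hbw : (b :: w).IsChain (Reduced d)) :
    ∀ c ∈ (prepend d a w).head?, Reduced d (a.jump d +ᵥ b) c := by
  obtain ⟨hb, hw⟩ := List.isChain_cons.1 hbw
  cases w with
  | nil => simpa [prepend] using reduced_jump_vadd_self h
  | cons c w =>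
    rcases eq_inv_or_reduced_or_bound_lt d a c with rfl | hc | hc
    · rw [prepend_inv_cons]
      intro e he
      have hle := ((List.isChain_cons.1 hw).1 e he).1
      exact reduced_jump_vadd_of_index_le h (by simpa using hle)
    · rw [prepend_of_reduced (by simpa using hc)]
      simpa using reduced_jump_vadd_self h
    · rw [prepend_of_bound_lt hc]
      simpa using (hb c rfl).vadd (a.jump d)

theorem isChain_prepend (a : Letter) {w : List Letter} (hw : w.IsChain (Reduced d)) :
    (prepend d a w).IsChain (Reduced d) := by
  induction w with
  | nil => simp [prepend]
  | cons b w ih =>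
    obtain ⟨hb, hw'⟩ := List.isChain_cons.1 hw
    rcases eq_inv_or_reduced_or_bound_lt d a b with rfl | h | h
    · rwa [prepend_inv_cons]
    · rw [prepend_of_reduced (by simpa using h)]
      exact List.isChain_cons.2 ⟨by simpa using h, hw⟩
    · rw [prepend_of_bound_lt h]
      exact List.isChain_cons.2 ⟨reduced_head_prepend h hw, ih hw'⟩

theorem prepend_inv_prepend (a : Letter) {w : List Letter} (hw : w.IsChain (Reduced d)) :
    prepend d a⁻¹ (prepend d a w) = w := by
  induction w with
  | nil => simp [prepend]
  | cons b w ih =>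
    obtain ⟨hb, hw'⟩ := List.isChain_cons.1 hw
    rcases eq_inv_or_reduced_or_bound_lt d a b with rfl | h | h
    · rw [prepend_inv_cons, prepend_of_reduced hb]
    · rw [prepend_of_reduced (a := a) (by simpa using h), inv_prepend_cons]
    · rw [prepend_of_bound_lt h, prepend_of_bound_lt (by simpa using h), ih hw', jump_inv,
        neg_vadd_vadd]

theorem prepend_comm {a b : Letter} (h : a.bound d < b.index) {w : List Letter}
    (hw : w.IsChain (Reduced d)) :
    prepend d a (prepend d b w) = prepend d (a.jump d +ᵥ b) (prepend d a w) := by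
  induction w with
  | nil =>
    have hba : prepend d (a.jump d +ᵥ b) [a] = [a.jump d +ᵥ b, a] :=
      prepend_of_reduced (by simpa using reduced_jump_vadd_self h)
    simpa [prepend, hba] using prepend_of_bound_lt h []
  | cons c w ih =>
    rcases eq_inv_or_reduced_or_bound_lt d b c with rfl | hc | hc
    · rw [prepend_inv_cons, prepend_of_bound_lt (by simpa using h), ← vadd_inv, prepend_inv_cons]
    · have hbcw : (b :: c :: w).IsChain (Reduced d) := List.isChain_cons.2 ⟨by simpa using hc, hw⟩
      rw [prepend_of_reduced (a := b) (by simpa using hc), prepend_of_bound_lt h,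
        prepend_of_reduced (reduced_head_prepend h hbcw)]
    · have hac : a.bound d < c.index := h.trans (b.index_le_bound.trans_lt hc)
      have hac' : a.bound d < (b.jump d +ᵥ c).index :=
        h.trans_le (b.index_le_jump_add_bound.trans (add_le_add_right hc.le _))
      have hbc : (a.jump d +ᵥ b).bound d < (a.jump d +ᵥ c).index := by simpa using hc
      rw [prepend_of_bound_lt hc, prepend_of_bound_lt hac', prepend_of_bound_lt hac,
        prepend_of_bound_lt hbc, ih (List.isChain_cons.1 hw).2, jump_vadd, vadd_comm]

end Letter

/-- A word in normal form: no two adjacent letters cancel, and no letter can be moved to the left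
by a relation of the ambient group of `Letter`. -/
@[ext]
structure NormalForm (d : ℕ) where
  letters : List Letter
  isChain : letters.IsChain (Letter.Reduced d)
  deriving DecidableEq

namespace NormalForm

open Letter

variable {d : ℕ}

instance : VAdd ℤ (NormalForm d) where
  vadd e w := ⟨w.letters.map (e +ᵥ ·), (List.isChain_map _).2 (w.isChain.imp fun _ _ h ↦ h.vadd e)⟩

@[simp] theorem letters_vadd (e : ℤ) (w : NormalForm d) :
    (e +ᵥ w).letters = w.letters.map (e +ᵥ ·) := rfl

instance : AddAction ℤ (NormalForm d) where
  zero_vadd _ := NormalForm.ext (by simp)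
  add_vadd _ _ _ := NormalForm.ext (by simp [add_vadd])

/-- Left multiplication by a letter. -/
def prependPerm (a : Letter) : Equiv.Perm (NormalForm d) where
  toFun w := ⟨prepend d a w.letters, isChain_prepend a w.isChain⟩
  invFun w := ⟨prepend d a⁻¹ w.letters, isChain_prepend a⁻¹ w.isChain⟩
  left_inv w := NormalForm.ext (prepend_inv_prepend a w.isChain)
  right_inv w := NormalForm.ext (by simpa using prepend_inv_prepend a⁻¹ w.isChain)

theorem prependPerm_inv (a : Letter) :
    (prependPerm a : Equiv.Perm (NormalForm d))⁻¹ = prependPerm a⁻¹ :=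
  Equiv.ext fun _ ↦ rfl

/-- The empty word. -/
def nil : NormalForm d := ⟨[], .nil⟩

/-- The action of `x_i` on normal forms. -/
def xgenPerm (d : ℕ) : ℕ → Equiv.Perm (NormalForm d)
  | 0 => AddAction.toPerm (-d : ℤ)
  | i + 1 => prependPerm ⟨i + 1, true⟩

theorem xgenPerm_mul_xgenPerm {i j : ℕ} (h : i < j) :
    xgenPerm d j * xgenPerm d i = xgenPerm d i * xgenPerm d (j + d) := by
  obtain ⟨j, rfl⟩ : ∃ k, j = k + 1 := ⟨j - 1, by omega⟩
  have hshift : (⟨j + 1, true⟩ : Letter) = -(d : ℤ) +ᵥ (⟨(j + d : ℕ) + 1, true⟩ : Letter) := by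
    ext
    · simp only [index_vadd]
      push_cast
      ring
    · rfl
  rw [Nat.add_right_comm]
  ext1 w
  apply NormalForm.ext
  cases i with
  | zero =>
    change prepend d ⟨j + 1, true⟩ (w.letters.map (-(d : ℤ) +ᵥ ·)) =
      (prepend d ⟨(j + d : ℕ) + 1, true⟩ w.letters).map (-(d : ℤ) +ᵥ ·)
    rw [map_vadd_prepend, ← hshift]
  | succ i =>
    change prepend d ⟨j + 1, true⟩ (prepend d ⟨i + 1, true⟩ w.letters) =
      prepend d ⟨i + 1, true⟩ (prepend d ⟨(j + d : ℕ) + 1, true⟩ w.letters)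
    have hlt : (⟨i + 1, true⟩ : Letter).bound d < (⟨(j + d : ℕ) + 1, true⟩ : Letter).index := by
      simp only [bound, if_true]
      omega
    rw [prepend_comm hlt w.isChain, hshift]
    rfl

/-- The action of `F(d + 1)` on normal forms. -/
def toPerm (d : ℕ) : FP (d + 1) →* Equiv.Perm (NormalForm d) :=
  PresentedGroup.toGroup (f := xgenPerm d) <| by
    rintro r ⟨i, j, h, rfl⟩
    simp only [map_mul, map_inv, FreeGroup.lift_apply_of, ← add_assoc, Nat.add_sub_cancel]
    rw [mul_inv_eq_one, mul_inv_eq_iff_eq_mul, xgenPerm_mul_xgenPerm h]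

instance : MulAction (FP (d + 1)) (NormalForm d) := MulAction.compHom _ (toPerm d)

theorem xgen_smul (i : ℕ) (w : NormalForm d) : xgen (d + 1) i • w = xgenPerm d i w :=
  DFunLike.congr_fun (PresentedGroup.toGroup.of (f := xgenPerm d) _) w

theorem xgen_inv_smul (i : ℕ) (w : NormalForm d) :
    (xgen (d + 1) i)⁻¹ • w = (xgenPerm d i)⁻¹ w := by
  rw [inv_smul_eq_iff, xgen_smul]
  exact ((xgenPerm d i).apply_symm_apply w).symm

/-- The normal forms whose first letter lies in `L`. -/
def headIn (d : ℕ) (L : Set Letter) : Set (NormalForm d) := {w | ∃ b ∈ w.letters.head?, b ∈ L}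

theorem headIn_mono {L L' : Set Letter} (h : L ⊆ L') : headIn d L ⊆ headIn d L' :=
  fun _ ⟨b, hb, hL⟩ ↦ ⟨b, hb, h hL⟩

theorem disjoint_headIn {L L' : Set Letter} (h : Disjoint L L') :
    Disjoint (headIn d L) (headIn d L') := by
  refine Set.disjoint_left.2 fun w ⟨b, hb, hL⟩ ⟨b', hb', hL'⟩ ↦ ?_
  rw [Option.mem_unique hb' hb] at hL'
  exact Set.disjoint_left.1 h hL hL'

theorem vadd_mem_headIn {L : Set Letter} {e : ℤ} {w : NormalForm d}
    (h : w ∈ headIn d {b | e +ᵥ b ∈ L}) : e +ᵥ w ∈ headIn d L := by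
  obtain ⟨b, hb, hL⟩ := h
  exact ⟨e +ᵥ b, by simp [Option.mem_def.1 hb], hL⟩

theorem prependPerm_mem_headIn {a : Letter} {w : NormalForm d}
    (h : w ∈ headIn d {b | Reduced d a b}) : prependPerm a w ∈ headIn d {a} := by
  obtain ⟨b, hb, hab⟩ := h
  refine ⟨a, ?_, Set.mem_singleton a⟩
  change a ∈ (prepend d a w.letters).head?
  have hhead : ∀ c ∈ w.letters.head?, Reduced d a c := fun c hc ↦ Option.mem_unique hb hc ▸ hab
  rw [prepend_of_reduced hhead]
  rfl

theorem prependPerm_nil_mem_headIn {a : Letter} {L : Set Letter} (h : a ∈ L) :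
    prependPerm a (nil : NormalForm d) ∈ headIn d L :=
  ⟨a, rfl, h⟩

end NormalForm

open Letter NormalForm

/-- The letters of the words that are counted, as vertices of the graph `Move.next` of admissible
successors: `zero` is `x_0`, `pos i` and `neg i` are `x_{i+1}` and `x_{i+1}⁻¹`, and `zeroInv i` is
the letter `x_0⁻¹` directly after `x_{i+1}`. -/
inductive Move (d : ℕ)
  | zero
  | pos (i : Fin d)
  | neg (i : Fin d)
  | zeroInv (i : Fin d)
  deriving DecidableEq

namespace Move

variable {d : ℕ}

/-- The group element represented by a letter. -/
def label : Move d → FP (d + 1)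
  | zero => xgen (d + 1) 0
  | pos i => xgen (d + 1) (i + 1)
  | neg i => (xgen (d + 1) (i + 1))⁻¹
  | zeroInv _ => (xgen (d + 1) 0)⁻¹

/-- The letters `pos i` for `i ∈ A` and `neg i` for `i ∈ B`. -/
def signed (A B : Finset (Fin d)) : Finset (Move d) := A.image pos ∪ B.image neg

/-- The letters that may follow a given letter in the words that are counted. -/
def next : Move d → Finset (Move d)
  | zero => insert zero (signed .univ .univ)
  | pos i => insert zero (insert (zeroInv i) (signed .univ (Finset.univ.erase i)))
  | neg i => insert zero (signed (.Iio i) (.Iic i))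
  | zeroInv i => signed (.Iic i) (.Iic i)

/-- The first letters of the normal forms to which a move is applied. -/
def domHead : Move d → Set Letter
  | zero => {b | b.index ≤ d}
  | pos i => {b | Reduced d ⟨(i : ℕ) + 1, true⟩ b}
  | neg i => {b | Reduced d ⟨(i : ℕ) + 1, false⟩ b}
  | zeroInv i => {b | 1 ≤ b.index ∧ b.index ≤ (i : ℕ) + 1}

/-- The first letters of the normal forms obtained by applying a move. -/
def imHead : Move d → Set Letter
  | zero => {b | b.index ≤ 0}
  | pos i => {⟨(i : ℕ) + 1, true⟩}
  | neg i => {⟨(i : ℕ) + 1, false⟩}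
  | zeroInv i => {b | d + 1 ≤ b.index ∧ b.index ≤ d + ((i : ℕ) + 1)}

theorem imHead_subset_domHead {s a : Move d} (ha : a ∈ next s) : imHead a ⊆ domHead s := by
  rintro ⟨j, _ | _⟩ hb <;> cases s <;> cases a <;>
    simp [next, signed, imHead, domHead, Reduced, bound, Letter.ext_iff,
      Fin.ext_iff] at ha hb ⊢ <;>
    omega

theorem zeroInv_mem_next {s : Move d} {i : Fin d} : zeroInv i ∈ next s ↔ s = pos i := by
  cases s <;> simp [next, signed, eq_comm]

theorem disjoint_imHead {s a a' : Move d} (ha : a ∈ next s) (ha' : a' ∈ next s) (hne : a ≠ a') :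
    Disjoint (imHead a) (imHead a') := by
  have hzeroInv {i j : Fin d} (hi : a = zeroInv i) (hj : a' = zeroInv j) : False := by
    subst hi hj
    obtain rfl := zeroInv_mem_next.1 ha
    exact hne (congrArg zeroInv (pos.inj (zeroInv_mem_next.1 ha')))
  rw [Set.disjoint_left]
  rintro b hb hb'
  cases a <;> cases a'
  case zeroInv.zeroInv => exact hzeroInv rfl rfl
  all_goals
    simp only [imHead, Set.mem_ofPred_eq, Set.mem_singleton_iff, Letter.ext_iff] at hb hb'
    grind

theorem mapsTo_label_smul (s : Move d) :
    Set.MapsTo (label s • ·) (headIn d (domHead s)) (headIn d (imHead s)) := by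
  intro w hw
  cases s with
  | zero =>
    simp only [label, xgen_smul]
    refine vadd_mem_headIn (headIn_mono (fun b hb ↦ ?_) hw)
    simp only [domHead, imHead, Set.mem_ofPred_eq, index_vadd] at hb ⊢
    omega
  | pos i =>
    simp only [label, xgen_smul]
    exact prependPerm_mem_headIn hw
  | neg i =>
    simp only [label, xgen_inv_smul, xgenPerm, prependPerm_inv]
    exact prependPerm_mem_headIn hw
  | zeroInv i =>
    simp only [label, xgen_inv_smul]
    refine vadd_mem_headIn (e := - -(d : ℤ)) (headIn_mono (fun b hb ↦ ?_) hw)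
    simp only [domHead, imHead, Set.mem_ofPred_eq, index_vadd] at hb ⊢
    omega

theorem isPingPong : IsPingPong (next (d := d)) (fun s w ↦ label s • w)
    (fun s ↦ headIn d (domHead s)) (fun s ↦ headIn d (imHead s)) where
  mapsTo := mapsTo_label_smul
  injOn s := (MulAction.injective (label s)).injOn
  im_subset_dom _ _ ha := headIn_mono (imHead_subset_domHead ha)
  pairwiseDisjoint _ _ ha _ ha' hne := disjoint_headIn (disjoint_imHead ha ha' hne)

/-- The last letter `x_1^{±1}` of the words that are counted, chosen so that it may follow the
letter before it. -/
def lastLabel : Move d → FP (d + 1)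
  | neg _ => (xgen (d + 1) 1)⁻¹
  | _ => xgen (d + 1) 1

theorem lastLabel_smul_nil_mem_headIn (hd : 1 ≤ d) (s : Move d) :
    lastLabel s • nil ∈ headIn d (domHead s) := by
  cases s with
  | neg i =>
    simp only [lastLabel, xgen_inv_smul, xgenPerm, prependPerm_inv]
    exact prependPerm_nil_mem_headIn (by simp [domHead, Reduced, bound, Letter.ext_iff])
  | _ =>
    simp only [lastLabel, xgen_smul]
    refine prependPerm_nil_mem_headIn ?_
    simp [domHead, Reduced, bound, Letter.ext_iff] <;> omega

/-- The entries of a positive eigenvector, of eigenvalue `ξ`, of the adjacency matrix of `next`,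
when `q = ξ / (ξ - 1)`. -/
def weight (q : ℝ) : Move d → ℝ
  | zero => 1
  | pos _ => 1
  | neg i => q ^ (i + 1 : ℕ) - 1
  | zeroInv i => q ^ (i + 1 : ℕ) - 1

theorem weight_le {q : ℝ} (hq : 1 ≤ q) (s : Move d) : weight q s ≤ q ^ d := by
  have hpow (i : Fin d) : q ^ (i + 1 : ℕ) - 1 ≤ q ^ d :=
    (sub_le_self _ zero_le_one).trans (pow_le_pow_right₀ hq i.isLt)
  cases s with
  | zero => exact one_le_pow₀ hq
  | pos i => exact one_le_pow₀ hq
  | neg i => exact hpow i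
  | zeroInv i => exact hpow i

theorem sum_signed (A B : Finset (Fin d)) (w : Move d → ℝ) :
    ∑ a ∈ signed A B, w a = ∑ i ∈ A, w (pos i) + ∑ i ∈ B, w (neg i) := by
  rw [signed, Finset.sum_union, Finset.sum_image, Finset.sum_image]
  · exact fun _ _ _ _ h ↦ neg.inj h
  · exact fun _ _ _ _ h ↦ pos.inj h
  · rw [Finset.disjoint_left]
    rintro (_ | _ | _ | _) <;> simp

theorem sum_range_pow_succ_sub_one {q ξ : ℝ} (hq : ξ * (q - 1) = q) (n : ℕ) :
    ∑ j ∈ Finset.range n, (q ^ (j + 1) - 1) = ξ * (q ^ n - 1) - n := by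
  simp only [pow_succ, Finset.sum_sub_distrib, Finset.sum_const, Finset.card_range, nsmul_one,
    ← Finset.sum_mul, ← geom_sum_mul q n]
  linear_combination (-∑ j ∈ Finset.range n, q ^ j) * hq

theorem sum_Iic_weight_neg {q ξ : ℝ} (hq : ξ * (q - 1) = q) (i : Fin d) :
    ∑ j ∈ Finset.Iic i, weight q (neg j) = ξ * (q ^ (i + 1 : ℕ) - 1) - (i + 1 : ℕ) := by
  rw [← sum_range_pow_succ_sub_one hq, Nat.range_succ_eq_Iic, ← Fin.map_valEmbedding_Iic,
    Finset.sum_map]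
  rfl

theorem sum_univ_weight_neg {q ξ : ℝ} (hq : ξ * (q - 1) = q) :
    ∑ j : Fin d, weight q (neg j) = ξ * (q ^ d - 1) - d := by
  rw [← sum_range_pow_succ_sub_one hq, ← Fin.sum_univ_eq_sum_range]
  rfl

theorem sum_next_weight {q ξ : ℝ} (hq : ξ * (q - 1) = q) (hqd : ξ * q ^ d = 2 * ξ - 1)
    (s : Move d) : ∑ a ∈ next s, weight q a = ξ * weight q s := by
  cases s with
  | zero =>
    rw [next, Finset.sum_insert (by simp [signed]), sum_signed, sum_univ_weight_neg hq]
    simp only [weight, Finset.sum_const, Finset.card_univ, Fintype.card_fin, nsmul_one]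
    linear_combination hqd
  | pos i =>
    rw [next, Finset.sum_insert (by simp [signed]), Finset.sum_insert (by simp [signed]),
      sum_signed, Finset.sum_erase_eq_sub (Finset.mem_univ i), sum_univ_weight_neg hq]
    simp only [weight, Finset.sum_const, Finset.card_univ, Fintype.card_fin, nsmul_one]
    linear_combination hqd
  | neg i =>
    rw [next, Finset.sum_insert (by simp [signed]), sum_signed, sum_Iic_weight_neg hq]
    simp only [weight, Finset.sum_const, Fin.card_Iio, nsmul_one]
    push_cast
    ring
  | zeroInv i =>
    rw [next, sum_signed, sum_Iic_weight_neg hq]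
    simp [weight]

end Move

open scoped Pointwise

section WordLength

variable {p : ℕ}

/-- The symmetric generating set `{x_0^{±1}, …, x_{p-1}^{±1}}`. -/
def symmGens (p : ℕ) : Set (FP p) := xgen p '' Set.Iio p ∪ (xgen p '' Set.Iio p)⁻¹

theorem xgen_mem_symmGens {i : ℕ} (hi : i < p) : xgen p i ∈ symmGens p := .inl ⟨i, hi, rfl⟩

theorem xgen_inv_mem_symmGens {i : ℕ} (hi : i < p) : (xgen p i)⁻¹ ∈ symmGens p :=
  .inr (Set.inv_mem_inv.2 ⟨i, hi, rfl⟩)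

theorem finite_symmGens (p : ℕ) : (symmGens p).Finite :=
  ((Set.finite_Iio p).image _).union ((Set.finite_Iio p).image _).inv

theorem mem_symmGens_iff {a : FP p} :
    a ∈ symmGens p ↔ ∃ i < p, a = xgen p i ∨ a = (xgen p i)⁻¹ := by
  simp only [symmGens, Set.mem_union, Set.mem_inv, Set.mem_image, Set.mem_Iio, and_or_left,
    exists_or, eq_comm (a := a), inv_eq_iff_eq_inv (a := xgen p _)]

theorem wlen_eq_sInf (g : FP p) : wlen p g = sInf {n | g ∈ symmGens p ^ n} := by
  simp only [wlen, mem_set_pow_iff_exists_list, mem_symmGens_iff]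

theorem xgen_mul_xgen {i j : ℕ} (h : i < j) :
    xgen p j * xgen p i = xgen p i * xgen p (j + p - 1) := by
  have hrel := PresentedGroup.one_of_mem (rels := ThompsonRels p) ⟨i, j, h, rfl⟩
  simp only [map_mul, map_inv] at hrel
  rw [mul_inv_eq_one, mul_inv_eq_iff_eq_mul] at hrel
  exact hrel

theorem closure_xgen_Iio (hp : 2 ≤ p) : Subgroup.closure (xgen p '' Set.Iio p) = ⊤ := by
  set H := Subgroup.closure (xgen p '' Set.Iio p)
  have hsmall {i : ℕ} (hi : i < p) : xgen p i ∈ H := Subgroup.subset_closure ⟨i, hi, rfl⟩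
  have hmem (i : ℕ) : xgen p i ∈ H := by
    induction i using Nat.strong_induction_on with
    | _ i ih =>
      obtain hi | hi := lt_or_ge i p
      · exact hsmall hi
      · have hconj := xgen_mul_xgen (p := p) (i := 0) (j := i - (p - 1)) (by omega)
        rw [show i - (p - 1) + p - 1 = i by omega, ← inv_mul_eq_iff_eq_mul] at hconj
        rw [← hconj]
        exact mul_mem (inv_mem (hsmall (by omega))) (mul_mem (ih _ (by omega)) (hsmall (by omega)))
  exact (Subgroup.eq_top_iff' H).2 (PresentedGroup.generated_by _ H hmem)

theorem mem_symmGens_pow_wlen (hp : 2 ≤ p) (g : FP p) : g ∈ symmGens p ^ wlen p g := by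
  rw [wlen_eq_sInf]
  exact Nat.sInf_mem (exists_mem_pow_of_closure_eq_top (closure_xgen_Iio hp) g)

theorem ball_subset_pow (hp : 2 ≤ p) (n : ℕ) :
    {g | wlen p g ≤ n} ⊆ insert 1 (symmGens p) ^ n := fun g hg ↦
  Set.pow_subset_pow (Set.subset_insert _ _) (Set.mem_insert _ _) hg (mem_symmGens_pow_wlen hp g)

theorem symmGens_pow_subset_ball (n : ℕ) : symmGens p ^ n ⊆ {g | wlen p g ≤ n} := fun g hg ↦ by
  rw [Set.mem_ofPred_eq, wlen_eq_sInf]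
  exact Nat.sInf_le hg

theorem card_ball_le (hp : 2 ≤ p) (n : ℕ) :
    Nat.card {g : FP p // wlen p g ≤ n} ≤ (insert 1 (symmGens p)).ncard ^ n :=
  have hfin := (finite_symmGens p).insert 1
  (Set.ncard_le_ncard (ball_subset_pow hp n) (finite_set_pow hfin n)).trans
    (ncard_set_pow_le hfin n)

theorem ncard_symmGens_pow_le_card_ball (hp : 2 ≤ p) (n : ℕ) :
    (symmGens p ^ n).ncard ≤ Nat.card {g : FP p // wlen p g ≤ n} :=
  Set.ncard_le_ncard (symmGens_pow_subset_ball n)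
    ((finite_set_pow ((finite_symmGens p).insert 1) n).subset (ball_subset_pow hp n))

end WordLength

namespace Move

variable {d : ℕ}

theorem label_mem_symmGens (s : Move d) : label s ∈ symmGens (d + 1) := by
  cases s with
  | zero => exact xgen_mem_symmGens d.succ_pos
  | pos i => exact xgen_mem_symmGens (Nat.succ_lt_succ i.isLt)
  | neg i => exact xgen_inv_mem_symmGens (Nat.succ_lt_succ i.isLt)
  | zeroInv i => exact xgen_inv_mem_symmGens d.succ_pos

theorem lastLabel_mem_symmGens (hd : 1 ≤ d) (s : Move d) :
    lastLabel s ∈ symmGens (d + 1) := by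
  cases s with
  | neg i => exact xgen_inv_mem_symmGens (Nat.succ_lt_succ hd)
  | _ => exact xgen_mem_symmGens (Nat.succ_lt_succ hd)

theorem card_pathPoints_le (hd : 1 ≤ d) (n : ℕ) (s : Move d) :
    (pathPoints next (fun a (w : NormalForm d) ↦ label a • w) (fun a ↦ lastLabel a • nil) n s).card
      ≤ (symmGens (d + 1) ^ (n + 1)).ncard := by
  have hsub := pathPoints_subset_pow_smul (next := next)
    (B := symmGens (d + 1) • {(nil : NormalForm d)})
    label_mem_symmGens
    (fun a ↦ Set.smul_mem_smul (lastLabel_mem_symmGens hd a) (Set.mem_singleton nil)) n s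
  have hfin := finite_set_pow (finite_symmGens (d + 1)) (n + 1)
  rw [← mul_smul, ← pow_succ, Set.smul_singleton] at hsub
  rw [← Set.ncard_coe_finset]
  exact (Set.ncard_le_ncard hsub (hfin.image _)).trans (Set.ncard_image_le hfin)

end Move

theorem pow_le_mul_card_ball {d : ℕ} (hd : 1 ≤ d) {q ξ : ℝ} (hξ : 0 ≤ ξ) (hq1 : 1 ≤ q)
    (hq : ξ * (q - 1) = q) (hqd : ξ * q ^ d = 2 * ξ - 1) (n : ℕ) :
    ξ ^ n ≤ q ^ d * Nat.card {g : FP (d + 1) // wlen (d + 1) g ≤ n + 1} := by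
  have hpaths := Move.isPingPong.mul_pow_le_card_pathPoints (Move.lastLabel_smul_nil_mem_headIn hd)
    hξ (Move.weight_le hq1) (fun s ↦ (Move.sum_next_weight hq hqd s).ge) n .zero
  rw [Move.weight, one_mul] at hpaths
  refine hpaths.trans ?_
  gcongr
  exact (Move.card_pathPoints_le hd n .zero).trans
    (ncard_symmGens_pow_le_card_ball (Nat.succ_le_succ hd) (n + 1))

end ThompsonGroup

/-- Theorem 6.1 (lower bound): if `ξ > 1` satisfies
`(2ξ − 1)(ξ − 1)^{p−1} = ξ^p`, then the growth rate of `F(p)` with respect to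
`x_0, …, x_{p−1}` is at least `ξ`. -/
theorem stmt18 (p : ℕ) (hp : 2 ≤ p) (ξ : ℝ) (hξ : 1 < ξ)
    (heq : (2 * ξ - 1) * (ξ - 1) ^ (p - 1) = ξ ^ p) :
    ξ ≤ Filter.liminf
        (fun n : ℕ => (Nat.card {g : FP p // wlen p g ≤ n} : ℝ) ^ ((n : ℝ)⁻¹))
        Filter.atTop := by
  obtain ⟨d, rfl⟩ : ∃ d, p = d + 1 := ⟨p - 1, by omega⟩
  have hξ0 : 0 < ξ := zero_lt_one.trans hξ
  have hξ1 : 0 < ξ - 1 := sub_pos.2 hξ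
  set q := ξ / (ξ - 1) with hq_def
  have hq1 : 1 ≤ q := (one_le_div hξ1).2 (sub_le_self _ zero_le_one)
  have hq : ξ * (q - 1) = q := by rw [hq_def]; field_simp; ring
  have hqd : ξ * q ^ d = 2 * ξ - 1 := by
    rw [Nat.add_sub_cancel] at heq
    rw [hq_def, div_pow, ← mul_div_assoc, div_eq_iff (by positivity), heq, pow_succ']
  refine le_liminf_rpow_inv (c := (q ^ d * ξ)⁻¹) (by positivity) hξ0.le (Nat.cast_nonneg _) ?_
    (.of_forall fun n ↦ mod_cast ThompsonGroup.card_ball_le hp n)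
  filter_upwards [Filter.eventually_ge_atTop 1] with n hn
  obtain ⟨m, rfl⟩ := Nat.exists_eq_add_of_le' hn
  rw [inv_mul_le_iff₀ (by positivity), pow_succ, mul_right_comm]
  gcongr
  exact ThompsonGroup.pow_le_mul_card_ball (by omega) hξ0.le hq1 hq hqd m
end
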